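/- arXiv:2602.08532 — 8 statements merged into one kernel-verified Lean document; each statement's English description precedes it below -/
import Mathlib

section
/- Let L, L₁, L₂ be first-order languages with L₁ and L₂ sharing exactly the symbols of L, let T be a set of L-sentences (a first-order theory), let A be a sentence over the sum language L ⊕ L₁ and B a sentence over the sum language L ⊕ L₂, all viewed as sentences over the combined language (L ⊕ L₁) ⊕ L₂ via the canonical language embeddings. If the set consisting of the (lifted) sentences of T together with A and B has no model, then there exists an L-sentence I such that every model of T together with A satisfies (the lift of) I, and the set consisting of T, (the lift of) I, and B has no model. -/
open FirstOrder FirstOrder.Language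

/-!
Put `T` into both sides, so that the task is to interpolate between `T ∪ A` and `T ∪ B`, and
suppose that no `L`-formula separates the two theories. Enlarge both by Henkin axioms `(∃ x, φ) →
φ(c)`, the witnesses `c` being drawn from one common supply of variables that act as new
constants. No separating formula `θ` can appear: only finitely many axioms are involved, one of
their witnesses occurs in none of the other axioms, and `∃ c, θ` separates already without the
axiom for such a `c`. By compactness the enlarged sets have models in which the variables satisfy
the same `L`-formulas. By the Tarski-Vaught test the elements named by variables form elementary
substructures, and matching the names is an `L`-isomorphism between these. Carrying the symbols of
`L₂` across it gives a model of `T`, `A` and `B`.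
-/

namespace CraigInterpolation

universe u ur p pr q qr w z

section Entails

variable {P : FirstOrder.Language.{p, pr}} {V : Type w}

/-- Every valuation in a nonempty structure that realizes `Γ` realizes `φ` (`entails_iff`). The
free variables are read as new constants, which makes the compactness theorem applicable. -/
def Entails (Γ : Set (P.Formula V)) (φ : P.Formula V) : Prop :=
  (Formula.equivSentence '' Γ : P[[V]].Theory) ⊨ᵇ Formula.equivSentence φ

theorem Entails.realize {Γ : Set (P.Formula V)} {φ : P.Formula V} (h : Entails Γ φ)
    {M : Type z} [P.Structure M] [Nonempty M] {v : V → M} (hv : ∀ γ ∈ Γ, γ.Realize v) :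
    φ.Realize v := by
  let := constantsOn.structure v
  have : M ⊨ (Formula.equivSentence '' Γ : P[[V]].Theory) := by
    rw [Theory.model_iff, Set.forall_mem_image]
    exact fun γ hγ => (Formula.realize_equivSentence M γ).2 (hv γ hγ)
  exact (Formula.realize_equivSentence M φ).1 (Theory.ModelsBoundedFormula.realize_sentence h M)

theorem entails_iff {Γ : Set (P.Formula V)} {φ : P.Formula V} :
    Entails Γ φ ↔ ∀ (M : Type (max p pr w)) [P.Structure M] [Nonempty M] (v : V → M),
      (∀ γ ∈ Γ, γ.Realize v) → φ.Realize v := by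
  refine ⟨fun h M _ _ v hv => h.realize hv, fun h => Theory.models_sentence_iff.2 fun M => ?_⟩
  let := (P.lhomWithConstants V).reduct M
  exact (Formula.realize_equivSentence M φ).2 <| h M (fun a => (P.con a : M)) fun γ hγ =>
    (Formula.realize_equivSentence M γ).1 <|
      M.is_model.realize_of_mem _ (Set.mem_image_of_mem _ hγ)

theorem Entails.mono {Γ Γ' : Set (P.Formula V)} {φ : P.Formula V} (h : Entails Γ φ)
    (hΓ : Γ ⊆ Γ') : Entails Γ' φ :=
  entails_iff.2 fun _ _ _ _ hv => h.realize fun γ hγ => hv γ (hΓ hγ)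

theorem exists_finset_subset_union_image {α β : Type*} {s : Set β} {k : α → β} {t : Set α}
    {F : Finset β} (hF : ↑F ⊆ s ∪ k '' t) :
    ∃ G : Finset α, ↑G ⊆ t ∧ (F : Set β) ⊆ s ∪ k '' G := by
  classical
  have hFs : ↑(F.filter (· ∉ s)) ⊆ k '' t := fun b hb =>
    (hF (Finset.mem_filter.1 hb).1).resolve_left (Finset.mem_filter.1 hb).2
  obtain ⟨G, hGt, hG⟩ := Finset.subset_set_image_iff.1 hFs
  refine ⟨G, hGt, fun b hb => or_iff_not_imp_left.2 fun hbs => ?_⟩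
  rw [← Finset.coe_image, hG]
  exact Finset.mem_filter.2 ⟨hb, hbs⟩

theorem Entails.exists_finset {ι : Type*} {Γ : Set (P.Formula V)} {k : ι → P.Formula V}
    {t : Set ι} {φ : P.Formula V} (h : Entails (Γ ∪ k '' t) φ) :
    ∃ G : Finset ι, ↑G ⊆ t ∧ Entails (Γ ∪ k '' G) φ := by
  classical
  obtain ⟨F, hF, hFφ⟩ := Theory.models_iff_finset_models.1 h
  obtain ⟨F, hF', rfl⟩ := Finset.subset_set_image_iff.1 hF
  rw [Finset.coe_image] at hFφ
  obtain ⟨G, hGt, hFG⟩ := exists_finset_subset_union_image hF'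
  exact ⟨G, hGt, Entails.mono hFφ hFG⟩

end Entails

section Separable

variable {L : FirstOrder.Language.{u, ur}} {P : FirstOrder.Language.{p, pr}}
  {Q : FirstOrder.Language.{q, qr}} {V : Type w}

theorem realize_onFormula_iInf (f : L →ᴸ P) {M : Type z} [P.Structure M] (S : Finset (L.Formula V))
    (v : V → M) :
    (f.onFormula (Formula.iInf fun θ : S => θ.1)).Realize v ↔
      ∀ θ ∈ S, (f.onFormula θ).Realize v := by
  let := f.reduct M
  simp only [LHom.realize_onFormula, Formula.realize_iInf, Subtype.forall]

theorem Entails.exists_iInf_not {f : L →ᴸ P} {Γ : Set (P.Formula V)} {Θ : Set (L.Formula V)}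
    (h : Entails (Γ ∪ f.onFormula '' Θ) ⊥) :
    ∃ S : Finset (L.Formula V), ↑S ⊆ Θ ∧
      Entails Γ (f.onFormula (Formula.iInf fun θ : S => θ.1)).not := by
  obtain ⟨S, hS, h⟩ := h.exists_finset
  refine ⟨S, hS, entails_iff.2 fun M _ _ v hv => Formula.realize_not.2 fun hθ => ?_⟩
  refine h.realize (v := v) ?_
  rintro _ (hγ | ⟨θ, hθS, rfl⟩)
  · exact hv _ hγ
  · exact (realize_onFormula_iInf f S v).1 hθ θ hθS

theorem exists_model_of_not_entails_bot {Γ : Set (P.Formula V)} (h : ¬ Entails Γ ⊥) :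
    ∃ (M : Type (max p pr w)) (_ : P.Structure M) (_ : Nonempty M) (v : V → M),
      ∀ γ ∈ Γ, γ.Realize v := by
  rw [entails_iff] at h
  push Not at h
  obtain ⟨M, _, _, v, hv, -⟩ := h
  exact ⟨M, inferInstance, inferInstance, v, hv⟩

/-- `Γ` and `Δ` are separated by a formula of a language `L` mapped to the languages of both. The
separating formula may share free variables with `Γ` and `Δ`. -/
def Separable (f : L →ᴸ P) (g : L →ᴸ Q) (Γ : Set (P.Formula V)) (Δ : Set (Q.Formula V)) : Prop :=
  ∃ θ : L.Formula V, Entails Γ (f.onFormula θ) ∧ Entails Δ (g.onFormula θ).not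

variable {f : L →ᴸ P} {g : L →ᴸ Q} {Γ : Set (P.Formula V)} {Δ : Set (Q.Formula V)}

theorem Separable.symm (h : Separable f g Γ Δ) : Separable g f Δ Γ := by
  obtain ⟨θ, hΓ, hΔ⟩ := h
  refine ⟨θ.not, hΔ, entails_iff.2 fun M _ _ v hv => ?_⟩
  exact Formula.realize_not.2 fun hθ => Formula.realize_not.1 hθ (hΓ.realize hv)

theorem Separable.exists_finset {ι κ : Type*} {k : ι → P.Formula V} {k' : κ → Q.Formula V}
    {t : Set ι} {t' : Set κ} (h : Separable f g (Γ ∪ k '' t) (Δ ∪ k' '' t')) :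
    ∃ (G : Finset ι) (G' : Finset κ), ↑G ⊆ t ∧ ↑G' ⊆ t' ∧
      Separable f g (Γ ∪ k '' G) (Δ ∪ k' '' G') := by
  obtain ⟨θ, hΓ, hΔ⟩ := h
  obtain ⟨G, hG, hΓ⟩ := hΓ.exists_finset
  obtain ⟨G', hG', hΔ⟩ := hΔ.exists_finset
  exact ⟨G, G', hG, hG', θ, hΓ, hΔ⟩

theorem exists_models_of_not_separable (h : ¬ Separable f g Γ Δ) :
    ∃ (M : Type (max p pr w)) (_ : P.Structure M) (_ : Nonempty M) (v : V → M)
      (N : Type (max q qr w)) (_ : Q.Structure N) (_ : Nonempty N) (v' : V → N),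
      (∀ γ ∈ Γ, γ.Realize v) ∧ (∀ δ ∈ Δ, δ.Realize v') ∧
      ∀ θ : L.Formula V, (f.onFormula θ).Realize v ↔ (g.onFormula θ).Realize v' := by
  have hΔ : ¬ Entails (Δ ∪ g.onFormula '' {θ | Entails Γ (f.onFormula θ)}) ⊥ := fun hΔ => by
    obtain ⟨S, hS, hΔS⟩ := hΔ.exists_iInf_not
    refine h ⟨_, entails_iff.2 fun M _ _ v hv => ?_, hΔS⟩
    exact (realize_onFormula_iInf f S v).2 fun θ hθ => (hS hθ).realize hv
  obtain ⟨N, _, _, v', hv'⟩ := exists_model_of_not_entails_bot hΔ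
  have hΓ : ¬ Entails (Γ ∪ f.onFormula '' {θ | (g.onFormula θ).Realize v'}) ⊥ := fun hΓ => by
    obtain ⟨S, hS, hΓS⟩ := hΓ.exists_iInf_not
    have hN : (g.onFormula (Formula.iInf fun θ : S => θ.1)).not.Realize v' :=
      hv' _ (.inr ⟨(Formula.iInf fun θ : S => θ.1).not, hΓS, rfl⟩)
    exact Formula.realize_not.1 hN ((realize_onFormula_iInf g S v').2 hS)
  obtain ⟨M, _, _, v, hv⟩ := exists_model_of_not_entails_bot hΓ
  have hle : ∀ θ : L.Formula V, (g.onFormula θ).Realize v' → (f.onFormula θ).Realize v :=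
    fun θ hθ => hv _ (.inr ⟨θ, hθ, rfl⟩)
  refine ⟨M, _, ‹_›, v, N, _, ‹_›, v', fun γ hγ => hv γ (.inl hγ), fun δ hδ => hv' δ (.inl hδ),
    fun θ => ⟨fun hθ => ?_, hle θ⟩⟩
  by_contra hθ'
  exact Formula.realize_not.1 (hle θ.not (Formula.realize_not.2 hθ')) hθ

end Separable

section Henkin

variable {L : FirstOrder.Language.{u, ur}} {P : FirstOrder.Language.{p, pr}}
  {Q : FirstOrder.Language.{q, qr}} {V : Type w}

/-- The Henkin axiom `(∃ x, φ(x)) → φ(c)`, where the variable `x` is `Sum.inr ()`. -/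
noncomputable def henkin (φ : P.Formula (V ⊕ Unit)) (c : V) : P.Formula V :=
  (φ.iExs Unit).imp (φ.relabel (Sum.elim id fun _ => c))

theorem realize_iExs_unit {M : Type z} [P.Structure M] {φ : P.Formula (V ⊕ Unit)} {v : V → M} :
    (φ.iExs Unit).Realize v ↔ ∃ m, φ.Realize (Sum.elim v fun _ => m) := by
  rw [Formula.realize_iExs]
  exact (Equiv.funUnique Unit M).exists_congr_left

theorem realize_henkin {M : Type z} [P.Structure M] {φ : P.Formula (V ⊕ Unit)} {c : V}
    {v : V → M} :
    (henkin φ c).Realize v ↔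
      ((∃ m, φ.Realize (Sum.elim v fun _ => m)) → φ.Realize (Sum.elim v fun _ => v c)) := by
  rw [henkin, Formula.realize_imp, realize_iExs_unit, Formula.realize_relabel, Sum.comp_elim]
  rfl

variable [DecidableEq V]

/-- `∃ c, θ`, for a free variable `c` of `θ`. -/
noncomputable def exVar (c : V) (θ : L.Formula V) : L.Formula V :=
  (θ.relabel fun x => if x = c then Sum.inr () else Sum.inl x : L.Formula (V ⊕ Unit)).iExs Unit

theorem realize_onFormula_exVar (f : L →ᴸ P) {M : Type z} [P.Structure M] {c : V}
    {θ : L.Formula V} {v : V → M} :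
    (f.onFormula (exVar c θ)).Realize v ↔
      ∃ m, (f.onFormula θ).Realize (Function.update v c m) := by
  let := f.reduct M
  simp only [LHom.realize_onFormula, exVar, realize_iExs_unit, Formula.realize_relabel]
  refine exists_congr fun m => iff_of_eq (congrArg θ.Realize (funext fun x => ?_))
  by_cases hx : x = c <;> simp [hx]

theorem realize_congr {M : Type z} [P.Structure M] {φ : P.Formula V} {v v' : V → M}
    (h : ∀ a ∈ φ.freeVarFinset, v a = v' a) : φ.Realize v ↔ φ.Realize v' := by
  unfold Formula.Realize
  rw [← BoundedFormula.realize_restrictFreeVar (φ := φ) (f := id) (v := fun a => v a) v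
    fun _ => rfl, ← BoundedFormula.realize_restrictFreeVar (φ := φ) (f := id) (v := fun a => v a)
    v' fun a => h a a.2]

/-- Changing the value of `c` does not affect the truth of `φ`. This is implied by, and easier to
establish than, the absence of `c` from the free variables of `φ`. -/
def IsFresh (c : V) (φ : P.Formula V) : Prop :=
  ∀ (M : Type (max p pr w)) [P.Structure M] (v : V → M) (m : M),
    φ.Realize (Function.update v c m) ↔ φ.Realize v

theorem isFresh_relabel {α : Type*} {φ : P.Formula α} {r : α → V} {c : V} (hc : c ∉ Set.range r) :
    IsFresh c (φ.relabel r) := fun M _ v m => by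
  rw [Formula.realize_relabel, Formula.realize_relabel, Function.update_comp_eq_of_notMem_range]
  exact hc

theorem realize_update_sumElim {M : Type z} [P.Structure M] {φ : P.Formula (V ⊕ Unit)} {c : V}
    (hc : c ∉ φ.freeVarFinset.toLeft) {v : V → M} {m x : M} :
    φ.Realize (Sum.elim (Function.update v c m) fun _ => x) ↔
      φ.Realize (Sum.elim v fun _ => x) := by
  rw [Finset.mem_toLeft] at hc
  refine realize_congr ?_
  rintro (b | b) hb
  · have hbc : b ≠ c := by
      rintro rfl
      exact hc hb
    simp [hbc]
  · rfl

theorem isFresh_henkin {φ : P.Formula (V ⊕ Unit)} {c d : V} (hc : c ∉ φ.freeVarFinset.toLeft)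
    (hcd : c ≠ d) : IsFresh c (henkin φ d) := fun M _ v m => by
  simp only [realize_henkin, realize_update_sumElim hc, Function.update_of_ne hcd.symm]

theorem exists_realize_henkin_update {M : Type z} [P.Structure M] {φ : P.Formula (V ⊕ Unit)} {c : V}
    (hc : c ∉ φ.freeVarFinset.toLeft) (v : V → M) :
    ∃ m, (henkin φ c).Realize (Function.update v c m) := by
  simp only [realize_henkin, realize_update_sumElim hc, Function.update_self]
  by_cases h : ∃ m, φ.Realize (Sum.elim v fun _ => m)
  · exact h.imp fun _ hm _ => hm
  · exact ⟨v c, fun h' => (h h').elim⟩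

variable {f : L →ᴸ P} {g : L →ᴸ Q} {Γ : Set (P.Formula V)} {Δ : Set (Q.Formula V)} {c : V}

/-- If `θ` separates the sets with the Henkin axiom, then `∃ c, θ` separates them without it. -/
theorem Separable.of_insert_henkin_left {φ : P.Formula (V ⊕ Unit)}
    (hc : c ∉ φ.freeVarFinset.toLeft) (hΓ : ∀ γ ∈ Γ, IsFresh c γ) (hΔ : ∀ δ ∈ Δ, IsFresh c δ)
    (h : Separable f g (insert (henkin φ c) Γ) Δ) : Separable f g Γ Δ := by
  obtain ⟨θ, hΓθ, hΔθ⟩ := h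
  refine ⟨exVar c θ, entails_iff.2 fun M _ _ v hv => ?_, entails_iff.2 fun N _ _ v hv => ?_⟩
  · obtain ⟨m, hm⟩ := exists_realize_henkin_update hc v
    refine (realize_onFormula_exVar f).2 ⟨m, hΓθ.realize ?_⟩
    rintro _ (rfl | hγ)
    · exact hm
    · exact (hΓ _ hγ M v m).2 (hv _ hγ)
  · rw [Formula.realize_not, realize_onFormula_exVar]
    rintro ⟨m, hm⟩
    exact Formula.realize_not.1 (hΔθ.realize fun δ hδ => (hΔ δ hδ N v m).2 (hv δ hδ)) hm

theorem Separable.of_insert_henkin_right {φ : Q.Formula (V ⊕ Unit)}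
    (hc : c ∉ φ.freeVarFinset.toLeft) (hΓ : ∀ γ ∈ Γ, IsFresh c γ) (hΔ : ∀ δ ∈ Δ, IsFresh c δ)
    (h : Separable f g Γ (insert (henkin φ c) Δ)) : Separable f g Γ Δ :=
  (h.symm.of_insert_henkin_left hc hΔ hΓ).symm

end Henkin

/-- For each index `i` with finite parameter set `params i`, a witness of its own that lies on a
strictly higher level than the parameters. So in every finite set of indices there is one whose
witness is a parameter of none of them. -/
structure FreshWitnesses {ι : Type*} {V : Type w} (params : ι → Finset V) where
  /-- The witness assigned to an index. -/
  wit : ι → V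
  wit_injective : Function.Injective wit
  /-- The level of a variable. -/
  level : V → ℕ
  level_lt : ∀ i, ∀ c ∈ params i, level c < level (wit i)

namespace FreshWitnesses

variable {ι : Type*}

theorem wit_notMem_params {V : Type w} {params : ι → Finset V} (W : FreshWitnesses params) {i j : ι}
    (h : W.level (W.wit i) ≤ W.level (W.wit j)) : W.wit j ∉ params i :=
  fun hj => (W.level_lt i _ hj).not_ge h

/-- In `ℕ × K`, on which the level is the first coordinate, indices have fresh witnesses as soon
as they embed into `K`. -/
def ofEmbedding {K : Type*} (e : ι ↪ K) (params : ι → Finset (ℕ × K)) :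
    FreshWitnesses params where
  wit i := ((params i).sup Prod.fst + 1, e i)
  wit_injective _ _ h := e.injective (congrArg Prod.snd h)
  level := Prod.fst
  level_lt _ _ hc := Nat.lt_succ_of_le (Finset.le_sup (f := Prod.fst) hc)

end FreshWitnesses

section HenkinWitnesses

variable {L : FirstOrder.Language.{u, ur}} {P : FirstOrder.Language.{p, pr}}
  {Q : FirstOrder.Language.{q, qr}} {V : Type w} [DecidableEq V]

/-- The variables other than `x` of a formula `φ(x)` of one of two languages. -/
def parameters : P.Formula (V ⊕ Unit) ⊕ Q.Formula (V ⊕ Unit) → Finset V :=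
  Sum.elim (fun φ => φ.freeVarFinset.toLeft) fun φ => φ.freeVarFinset.toLeft

/-- Finitely many Henkin axioms are removed in the order of decreasing level of their witnesses. -/
theorem Separable.of_union_henkin {f : L →ᴸ P} {g : L →ᴸ Q} {Γ : Set (P.Formula V)}
    {Δ : Set (Q.Formula V)} (W : FreshWitnesses (parameters (P := P) (Q := Q) (V := V)))
    (hΓ : ∀ i, ∀ γ ∈ Γ, IsFresh (W.wit i) γ) (hΔ : ∀ i, ∀ δ ∈ Δ, IsFresh (W.wit i) δ)
    (F : Finset (P.Formula (V ⊕ Unit) ⊕ Q.Formula (V ⊕ Unit)))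
    (h : Separable f g (Γ ∪ (fun φ => henkin φ (W.wit (.inl φ))) '' F.toLeft)
      (Δ ∪ (fun φ => henkin φ (W.wit (.inr φ))) '' F.toRight)) :
    Separable f g Γ Δ := by
  classical
  induction F using Finset.induction_on_max_value fun i => W.level (W.wit i) with
  | empty => simpa [Finset.toLeft, Finset.toRight] using h
  | insert i s hi hmax ih =>
    have hi_fresh : W.wit i ∉ parameters i := W.wit_notMem_params le_rfl
    have hne : ∀ j ∈ s, W.wit i ≠ W.wit j := fun j hj hij => hi (W.wit_injective hij ▸ hj)
    have hΓs : ∀ γ ∈ Γ ∪ (fun φ => henkin φ (W.wit (.inl φ))) '' s.toLeft,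
        IsFresh (W.wit i) γ := by
      rintro _ (hγ | ⟨φ, hφ, rfl⟩)
      · exact hΓ i _ hγ
      · have hφs : .inl φ ∈ s := Finset.mem_toLeft.1 hφ
        exact isFresh_henkin (W.wit_notMem_params (hmax _ hφs)) (hne _ hφs)
    have hΔs : ∀ δ ∈ Δ ∪ (fun φ => henkin φ (W.wit (.inr φ))) '' s.toRight,
        IsFresh (W.wit i) δ := by
      rintro _ (hδ | ⟨φ, hφ, rfl⟩)
      · exact hΔ i _ hδ
      · have hφs : .inr φ ∈ s := Finset.mem_toRight.1 hφ
        exact isFresh_henkin (W.wit_notMem_params (hmax _ hφs)) (hne _ hφs)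
    refine ih ?_
    rcases i with φ | φ
    · rw [Finset.toLeft_insert_inl, Finset.toRight_insert_inl, Finset.coe_insert,
        Set.image_insert_eq, Set.union_insert] at h
      exact h.of_insert_henkin_left hi_fresh hΓs hΔs
    · rw [Finset.toLeft_insert_inr, Finset.toRight_insert_inr, Finset.coe_insert,
        Set.image_insert_eq, Set.union_insert] at h
      exact h.of_insert_henkin_right hi_fresh hΓs hΔs

/-- If `Γ` and `Δ` are inseparable, they stay so when all Henkin axioms are added. -/
theorem exists_henkin_models_of_not_separable {f : L →ᴸ P} {g : L →ᴸ Q} {Γ : Set (P.Formula V)}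
    {Δ : Set (Q.Formula V)} (W : FreshWitnesses (parameters (P := P) (Q := Q) (V := V)))
    (hΓ : ∀ i, ∀ γ ∈ Γ, IsFresh (W.wit i) γ) (hΔ : ∀ i, ∀ δ ∈ Δ, IsFresh (W.wit i) δ)
    (h : ¬ Separable f g Γ Δ) :
    ∃ (M : Type (max p pr w)) (_ : P.Structure M) (_ : Nonempty M) (v : V → M)
      (N : Type (max q qr w)) (_ : Q.Structure N) (_ : Nonempty N) (v' : V → N),
      (∀ γ ∈ Γ, γ.Realize v) ∧ (∀ δ ∈ Δ, δ.Realize v') ∧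
      (∀ φ, ∃ c, (henkin φ c : P.Formula V).Realize v) ∧
      (∀ φ, ∃ c, (henkin φ c : Q.Formula V).Realize v') ∧
      ∀ θ : L.Formula V, (f.onFormula θ).Realize v ↔ (g.onFormula θ).Realize v' := by
  have hW : ¬ Separable f g (Γ ∪ (fun φ => henkin φ (W.wit (.inl φ))) '' Set.univ)
      (Δ ∪ (fun φ => henkin φ (W.wit (.inr φ))) '' Set.univ) := fun hsep => by
    obtain ⟨F, F', -, -, hsep⟩ := hsep.exists_finset
    refine h (Separable.of_union_henkin W hΓ hΔ (F.disjSum F') ?_)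
    rwa [Finset.toLeft_disjSum, Finset.toRight_disjSum]
  obtain ⟨M, _, _, v, N, _, _, v', hv, hv', hθ⟩ := exists_models_of_not_separable hW
  exact ⟨M, _, ‹_›, v, N, _, ‹_›, v', fun γ hγ => hv γ (.inl hγ), fun δ hδ => hv' δ (.inl hδ),
    fun φ => ⟨_, hv _ (.inr ⟨φ, trivial, rfl⟩)⟩, fun φ => ⟨_, hv' _ (.inr ⟨φ, trivial, rfl⟩)⟩, hθ⟩

end HenkinWitnesses

section Cardinality

open Cardinal

theorem mk_formula_le {P : FirstOrder.Language.{p, pr}} {α : Type w} {κ : Cardinal.{max w p pr}}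
    (hκ : ℵ₀ ≤ κ) (hα : Cardinal.lift.{max p pr} #α ≤ κ) (hP : Cardinal.lift.{w} P.card ≤ κ) :
    #(P.Formula α) ≤ κ :=
  calc
    #(P.Formula α) ≤ #(Σ n, P.BoundedFormula α n) :=
      mk_le_of_injective (f := Sigma.mk 0) sigma_mk_injective
    _ ≤ max ℵ₀ (Cardinal.lift.{max p pr} #α + Cardinal.lift.{w} P.card) :=
      BoundedFormula.card_le
    _ ≤ κ := max_le hκ (add_le_of_le hκ hα hP)

theorem mk_formula_prod_le {P : FirstOrder.Language.{p, pr}} {K : Type (max p pr w)} [Infinite K]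
    (e : P.Symbols ↪ K) : #(P.Formula ((ℕ × K) ⊕ Unit)) ≤ #K := by
  have hK : ℵ₀ ≤ #K := aleph0_le_mk K
  have hV : #((ℕ × K) ⊕ Unit) = #K := by
    simp [aleph0_mul_eq hK, add_one_eq hK]
  refine mk_formula_le.{p, pr, max p pr w} hK ?_ ?_
  · rw [lift_id'.{max p pr, max p pr w}, hV]
  · exact mk_le_of_injective (f := fun s : ULift P.Symbols => e s.down)
      (e.injective.comp ULift.down_injective)

theorem exists_freshWitnesses (P : FirstOrder.Language.{p, pr}) (Q : FirstOrder.Language.{q, qr}) :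
    ∃ (V : Type (max p pr q qr)) (_ : DecidableEq V),
      Nonempty (FreshWitnesses (parameters (P := P) (Q := Q) (V := V))) := by
  classical
  let K : Type (max p pr q qr) := ℕ ⊕ (P.Symbols ⊕ Q.Symbols)
  have hP : #(P.Formula ((ℕ × K) ⊕ Unit)) ≤ #K :=
    mk_formula_prod_le.{p, pr, max q qr} (Function.Embedding.inl.trans .inr)
  have hQ : #(Q.Formula ((ℕ × K) ⊕ Unit)) ≤ #K :=
    mk_formula_prod_le.{q, qr, max p pr} (Function.Embedding.inr.trans .inr)
  obtain ⟨e⟩ : Nonempty ((P.Formula ((ℕ × K) ⊕ Unit) ⊕ Q.Formula ((ℕ × K) ⊕ Unit)) ↪ K) := by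
    rw [← Cardinal.le_def, mk_sum, lift_id, lift_id]
    exact add_le_of_le (aleph0_le_mk K) hP hQ
  exact ⟨ℕ × K, inferInstance, ⟨.ofEmbedding e _⟩⟩

end Cardinality

section NamedElements

variable {L : FirstOrder.Language.{u, ur}} {P : FirstOrder.Language.{p, pr}} {V : Type w}

theorem meetsDefinable_range {M : Type z} [P.Structure M] {v : V → M}
    (h : ∀ φ : P.Formula (V ⊕ Unit), ∃ c, (henkin φ c).Realize v) :
    P.MeetsDefinable (Set.range v) := by
  rintro D ⟨x, hx⟩ hD
  obtain ⟨φ, hφ⟩ := Set.definable_iff_exists_formula_sum.1 hD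
  let ψ : P.Formula (V ⊕ Unit) := φ.relabel (Sum.map (Set.rangeSplitting v) fun _ => ())
  have hψ : ∀ m, ψ.Realize (Sum.elim v fun _ => m) ↔ m ∈ D := fun m => by
    have hm : m ∈ D ↔ φ.Realize (Sum.elim (↑) fun _ => m) := Set.ext_iff.1 hφ fun _ => m
    rw [hm, Formula.realize_relabel, Sum.elim_comp_map, Set.comp_rangeSplitting]
    rfl
  obtain ⟨c, hc⟩ := h ψ
  exact ⟨v c, (hψ _).1 (realize_henkin.1 hc ⟨x, (hψ x).2 hx⟩), c, rfl⟩

theorem exists_surjective_elementarySubstructure {M : Type z} [P.Structure M] {v : V → M}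
    (h : ∀ φ : P.Formula (V ⊕ Unit), ∃ c, (henkin φ c).Realize v) :
    ∃ (S : P.ElementarySubstructure M) (v₀ : V → S), Function.Surjective v₀ ∧
      ∀ φ : P.Formula V, φ.Realize v₀ ↔ φ.Realize v := by
  let S := (meetsDefinable_range h).toElementarySubstructure
  have hS : (S : Set M) = Set.range v := (meetsDefinable_range h).closure_eq_self
  have hv : ∀ c, v c ∈ S := fun c => hS.ge ⟨c, rfl⟩
  refine ⟨S, fun c => ⟨v c, hv c⟩, fun x => ?_, fun φ => ?_⟩
  · obtain ⟨c, hc⟩ := hS.le x.2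
    exact ⟨c, Subtype.ext hc⟩
  · exact (S.subtype.map_formula φ _).symm

theorem nonempty_equiv_of_realize_iff {X Y : Type*} [L.Structure X] [L.Structure Y] {v : V → X}
    {v' : V → Y} (hv : Function.Surjective v) (hv' : Function.Surjective v')
    (h : ∀ θ : L.Formula V, θ.Realize v ↔ θ.Realize v') : Nonempty (X ≃[L] Y) := by
  obtain ⟨s, hs⟩ := hv.hasRightInverse
  let e : X ↪ₑ[L] Y :=
    { toFun := v' ∘ s
      map_formula' := fun n φ x => by
        have hx : v ∘ s ∘ x = x := funext fun i => hs (x i)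
        rw [Function.comp_assoc, ← Formula.realize_relabel, ← h, Formula.realize_relabel, hx] }
  have he : Function.Surjective e := fun y => by
    obtain ⟨a, rfl⟩ := hv' y
    have ha := h ((Term.var (s (v a))).equal (Term.var a))
    simp only [Formula.realize_equal, Term.realize_var, hs (v a), true_iff] at ha
    exact ⟨v a, ha⟩
  exact ⟨{ Equiv.ofBijective e ⟨e.injective, he⟩ with
    map_fun' := e.map_fun
    map_rel' := e.map_rel }⟩

end NamedElements

section JointConsistency

variable {L : FirstOrder.Language.{u, ur}} {P : FirstOrder.Language.{p, pr}}
  {Q : FirstOrder.Language.{q, qr}} {V : Type w}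

theorem forall_realize_relabel_iff_model {M : Type z} [P.Structure M] {T : P.Theory} {v : V → M} :
    (∀ γ ∈ Formula.relabel Empty.elim '' T, γ.Realize v) ↔ M ⊨ T := by
  simp only [Set.forall_mem_image, Formula.realize_relabel, Theory.model_iff, Sentence.Realize,
    Unique.eq_default (v ∘ Empty.elim)]

theorem realize_onSentence_exClosure [DecidableEq V] (f : L →ᴸ P) {M : Type z} [P.Structure M]
    [Nonempty M] {θ : L.Formula V} :
    M ⊨ f.onSentence θ.exClosure ↔ ∃ v : V → M, (f.onFormula θ).Realize v := by
  let := f.reduct M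
  rw [LHom.realize_onSentence,
    ← Formula.exists_realize_equivSentence_iff_realize_exClosure]
  refine exists_congr fun v => ?_
  rw [LHom.realize_onFormula, ← Formula.realize_equivSentence_symm, Equiv.symm_apply_apply]

theorem Separable.exists_sentence {f : L →ᴸ P} {g : L →ᴸ Q} {T : P.Theory}
    {U : Q.Theory}
    (h : Separable f g (Formula.relabel Empty.elim '' T : Set (P.Formula V))
      (Formula.relabel Empty.elim '' U)) :
    ∃ I : L.Sentence, T ⊨ᵇ f.onSentence I ∧ U ⊨ᵇ (g.onSentence I).not := by
  classical
  obtain ⟨θ, hT, hU⟩ := h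
  refine ⟨θ.exClosure, Theory.models_sentence_iff.2 fun M => ?_,
    Theory.models_sentence_iff.2 fun N => ?_⟩
  · exact (realize_onSentence_exClosure f).2
      ⟨_, hT.realize (v := fun _ => Classical.arbitrary M)
        (forall_realize_relabel_iff_model.2 M.is_model)⟩
  · rw [Sentence.realize_not, realize_onSentence_exClosure]
    rintro ⟨v, hv⟩
    exact Formula.realize_not.1 (hU.realize (forall_realize_relabel_iff_model.2 N.is_model)) hv

/-- A form of Robinson's joint consistency theorem. -/
theorem exists_interpolant_or_nonempty_equiv (f : L →ᴸ P) (g : L →ᴸ Q) (T : P.Theory)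
    (U : Q.Theory) :
    (∃ I : L.Sentence, T ⊨ᵇ f.onSentence I ∧ U ⊨ᵇ (g.onSentence I).not) ∨
    ∃ (X : Theory.ModelType.{p, pr, max p pr q qr} T)
      (Y : Theory.ModelType.{q, qr, max p pr q qr} U),
      letI := f.reduct X
      letI := g.reduct Y
      Nonempty (X ≃[L] Y) := by
  refine or_iff_not_imp_left.2 fun hI => ?_
  obtain ⟨V, _, ⟨W⟩⟩ := exists_freshWitnesses P Q
  have hsep := mt (Separable.exists_sentence (V := V)) hI
  have hfresh : ∀ c : V, c ∉ Set.range Empty.elim := fun c ⟨a, _⟩ => a.elim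
  obtain ⟨M, _, _, v, N, _, _, v', hT, hU, hP, hQ, hθ⟩ := exists_henkin_models_of_not_separable W
    (fun i => Set.forall_mem_image.2 fun _ _ => isFresh_relabel (hfresh _))
    (fun i => Set.forall_mem_image.2 fun _ _ => isFresh_relabel (hfresh _)) hsep
  have : M ⊨ T := forall_realize_relabel_iff_model.1 hT
  have : N ⊨ U := forall_realize_relabel_iff_model.1 hU
  obtain ⟨X, x, hx, hxv⟩ := exists_surjective_elementarySubstructure hP
  obtain ⟨Y, y, hy, hyv⟩ := exists_surjective_elementarySubstructure hQ
  let := f.reduct X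
  let := g.reduct Y
  have hXY : Nonempty (X ≃[L] Y) := nonempty_equiv_of_realize_iff hx hy fun θ => by
    rw [← LHom.realize_onFormula f, ← LHom.realize_onFormula g, hxv, hyv, hθ]
  exact ⟨.of T X, .of U Y, hXY⟩

end JointConsistency

section Amalgamation

variable {L : FirstOrder.Language.{u, ur}} {P : FirstOrder.Language.{p, pr}}
  {L₂ : FirstOrder.Language.{q, qr}}

theorem nonempty_sum_equiv {X Y : Type*} [L.Structure X] [L₂.Structure X]
    [(L.sum L₂).Structure Y] [L.Structure Y] [L₂.Structure Y]
    [(LHom.sumInl : L →ᴸ L.sum L₂).IsExpansionOn Y]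
    [(LHom.sumInr : L₂ →ᴸ L.sum L₂).IsExpansionOn Y] (e : X ≃[L] Y) (e₂ : X ≃[L₂] Y)
    (h : ∀ x, e₂ x = e x) : Nonempty (X ≃[L.sum L₂] Y) := by
  have he : e.toEquiv = e₂.toEquiv := Equiv.ext fun x => (h x).symm
  refine ⟨{ e.toEquiv with map_fun' := ?_, map_rel' := ?_ }⟩
  · rintro n (F | F) x
    · exact (e.map_fun F x).trans (LHom.map_onFunction LHom.sumInl F _).symm
    · rw [he]
      exact (e₂.map_fun F x).trans
        (LHom.map_onFunction (LHom.sumInr : L₂ →ᴸ L.sum L₂) F _).symm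
  · rintro n (R | R) x
    · exact (LHom.map_onRelation LHom.sumInl R _).to_iff.trans (e.map_rel R x)
    · rw [he]
      exact (LHom.map_onRelation (LHom.sumInr : L₂ →ᴸ L.sum L₂) R _).to_iff.trans
        (e₂.map_rel R x)

theorem isSatisfiable_union_of_equiv {f : L →ᴸ P} {T : P.Theory} {U : (L.sum L₂).Theory}
    {X Y : Type z} [P.Structure X] [L.Structure X] [f.IsExpansionOn X] [Nonempty X] [X ⊨ T]
    [(L.sum L₂).Structure Y] [L.Structure Y] [(LHom.sumInl : L →ᴸ L.sum L₂).IsExpansionOn Y]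
    [Y ⊨ U] (e : X ≃[L] Y) :
    ((LHom.sumInl : P →ᴸ P.sum L₂).onTheory T ∪
      (f.sumMap (LHom.id L₂)).onTheory U).IsSatisfiable := by
  let := (LHom.sumInr : L₂ →ᴸ L.sum L₂).reduct Y
  let : L₂.Structure X := e.symm.toEquiv.inducedStructure
  obtain ⟨E⟩ := nonempty_sum_equiv e (e.symm.toEquiv.inducedStructureEquiv (L := L₂)).symm
    fun _ => rfl
  have hT : X ⊨ (LHom.sumInl : P →ᴸ P.sum L₂).onTheory T := (LHom.onTheory_model _ _).2 ‹_›
  have hU : X ⊨ (f.sumMap (LHom.id L₂)).onTheory U :=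
    (LHom.onTheory_model _ _).2 (StrongHomClass.theory_model E.symm)
  have := hT.union hU
  exact Theory.Model.isSatisfiable X

theorem exists_interpolant (f : L →ᴸ P) {T : P.Theory} {U : (L.sum L₂).Theory}
    (h : ¬ ((LHom.sumInl : P →ᴸ P.sum L₂).onTheory T ∪
      (f.sumMap (LHom.id L₂)).onTheory U).IsSatisfiable) :
    ∃ I : L.Sentence, T ⊨ᵇ f.onSentence I ∧
      U ⊨ᵇ ((LHom.sumInl : L →ᴸ L.sum L₂).onSentence I).not := by
  refine (exists_interpolant_or_nonempty_equiv f LHom.sumInl T U).resolve_right ?_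
  rintro ⟨X, Y, ⟨e⟩⟩
  let := f.reduct X
  let := (LHom.sumInl : L →ᴸ L.sum L₂).reduct Y
  exact h (isSatisfiable_union_of_equiv e)

end Amalgamation

section Transfer

variable {L : FirstOrder.Language.{u, ur}} {P : FirstOrder.Language.{p, pr}}
  {Q : FirstOrder.Language.{q, qr}}

theorem onSentence_comp (g : P →ᴸ Q) (f : L →ᴸ P) (φ : L.Sentence) :
    (g.comp f).onSentence φ = g.onSentence (f.onSentence φ) :=
  congrFun (LHom.comp_onBoundedFormula g f) φ

theorem onTheory_comp (g : P →ᴸ Q) (f : L →ᴸ P) (T : L.Theory) :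
    (g.comp f).onTheory T = g.onTheory (f.onTheory T) := by
  simp only [LHom.onTheory, Set.image_image, onSentence_comp]

theorem models_onSentence (f : L →ᴸ P) {T : L.Theory} {φ : L.Sentence} (h : T ⊨ᵇ φ) :
    f.onTheory T ⊨ᵇ f.onSentence φ := by
  refine Theory.models_sentence_iff.2 fun M => ?_
  let := f.reduct M
  have : M ⊨ T := (LHom.onTheory_model f T).1 M.is_model
  exact (LHom.realize_onSentence M f φ).2 (h.realize_sentence M)

theorem not_isSatisfiable_union_singleton {T : L.Theory} {φ : L.Sentence} (h : T ⊨ᵇ φ.not) :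
    ¬ (T ∪ {φ}).IsSatisfiable := by
  rintro ⟨M⟩
  have : M ⊨ T := M.is_model.mono Set.subset_union_left
  exact (Sentence.realize_not M).1 (h.realize_sentence M)
    (M.is_model.realize_of_mem φ (.inr rfl))

end Transfer

end CraigInterpolation

open CraigInterpolation

theorem exists_T_separator_general {L P L₂ : Language} (f : L →ᴸ P) (T : L.Theory) (A : P.Theory)
    (B : (L.sum L₂).Theory)
    (h : ¬ (((LHom.sumInl : P →ᴸ P.sum L₂).comp f).onTheory T ∪
      ((LHom.sumInl : P →ᴸ P.sum L₂).onTheory A ∪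
        (f.sumMap (LHom.id L₂)).onTheory B)).IsSatisfiable) :
    ∃ I : L.Sentence,
      (((LHom.sumInl : P →ᴸ P.sum L₂).comp f).onTheory T ∪
        (LHom.sumInl : P →ᴸ P.sum L₂).onTheory A ⊨ᵇ
          ((LHom.sumInl : P →ᴸ P.sum L₂).comp f).onSentence I) ∧
      ¬ (((LHom.sumInl : P →ᴸ P.sum L₂).comp f).onTheory T ∪
        ({((LHom.sumInl : P →ᴸ P.sum L₂).comp f).onSentence I} ∪
          (f.sumMap (LHom.id L₂)).onTheory B)).IsSatisfiable := by
  have hcomp : (f.sumMap (LHom.id L₂)).comp LHom.sumInl = LHom.sumInl.comp f :=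
    LHom.sumMap_comp_inl f (LHom.id L₂)
  have hTA : (LHom.sumInl : P →ᴸ P.sum L₂).onTheory (f.onTheory T ∪ A) =
      (LHom.sumInl.comp f).onTheory T ∪ LHom.sumInl.onTheory A := by
    rw [onTheory_comp]
    exact Set.image_union ..
  have hTB : (f.sumMap (LHom.id L₂)).onTheory (LHom.sumInl.onTheory T ∪ B) =
      (LHom.sumInl.comp f).onTheory T ∪ (f.sumMap (LHom.id L₂)).onTheory B := by
    rw [← hcomp, onTheory_comp]
    exact Set.image_union ..
  obtain ⟨I, hA, hB⟩ := exists_interpolant f (T := f.onTheory T ∪ A)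
    (U := LHom.sumInl.onTheory T ∪ B) (by rwa [hTA, hTB, ← Set.union_union_distrib_left])
  refine ⟨I, ?_, ?_⟩
  · rw [onSentence_comp, ← hTA]
    exact models_onSentence _ hA
  · rw [Set.union_comm {_}, ← Set.union_assoc, ← hTB, ← hcomp, onSentence_comp]
    exact not_isSatisfiable_union_singleton (models_onSentence _ hB)


/-- Existence of T-separators (reverse Craig interpolants modulo a theory T):
if the lifted theory `T` together with `A` (over `L ⊕ L₁`) and `B` (over `L ⊕ L₂`)
has no model over the combined language `(L ⊕ L₁) ⊕ L₂`, then there is an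
`L`-sentence `I` entailed by `T ∪ {A}` and inconsistent with `T ∪ {B}`. -/
theorem exists_T_separator (L L₁ L₂ : Language) (T : L.Theory)
    (A : (L.sum L₁).Sentence) (B : (L.sum L₂).Sentence)
    (liftA : (L.sum L₁) →ᴸ ((L.sum L₁).sum L₂))
    (liftB : (L.sum L₂) →ᴸ ((L.sum L₁).sum L₂))
    (liftL : L →ᴸ ((L.sum L₁).sum L₂))
    (hA : liftA = LHom.sumInl)
    (hB : liftB = LHom.sumMap LHom.sumInl (LHom.id L₂))
    (hL : liftL = LHom.comp LHom.sumInl LHom.sumInl)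
    (hunsat : ¬ (liftL.onTheory T ∪ {liftA.onSentence A, liftB.onSentence B}).IsSatisfiable) :
    ∃ I : L.Sentence,
      ((liftL.onTheory T ∪ {liftA.onSentence A}) ⊨ᵇ liftL.onSentence I) ∧
      ¬ (liftL.onTheory T ∪ {liftL.onSentence I, liftB.onSentence B}).IsSatisfiable := by
  subst hA hB hL
  simpa only [LHom.onTheory, Set.image_singleton, Set.insert_eq] using
    exists_T_separator_general LHom.sumInl T {A} {B}
      (by simpa only [LHom.onTheory, Set.image_singleton, Set.insert_eq] using hunsat)
end

section
/- (Farkas' lemma) Let A be a real m × n matrix and b ∈ ℝ^m a column vector. There exists a column vector x ∈ ℝ^n with A x ≤ b (componentwise) if and only if for every row vector y ∈ ℝ^m with y ≥ 0 (componentwise) and y A = 0 it is the case that y · b ≥ 0. -/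
open Matrix

/-!
Homogenise: `A x ≤ b` is solvable iff `A x ≤ t • b` is solvable with `t > 0`. Otherwise the
functional `(x, t) ↦ -t` is nonnegative wherever all the slacks `t * b i - (A x) i` are, so it is a
nonnegative combination of them, and the coefficients `y` satisfy `y A = 0` and `y ⬝ᵥ b = -1`.

That a functional `g` nonnegative wherever finitely many functionals are lies in the cone they
generate is proved by induction on their number, on all subspaces `W` at once. When `f` is added,
either the other functionals already control `g`, or some `x₀ ∈ W` satisfies their constraints but
has `g x₀ < 0`, whence `f x₀ < 0`. The induction hypothesis on `W ⊓ ker f` represents `g` there, and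
a nonnegative multiple of `f` corrects the value at `x₀`, hence on all of `W`.
-/

theorem apply_nonneg_of_mem_hull {R M : Type*} [CommSemiring R] [PartialOrder R] [IsOrderedRing R]
    [AddCommMonoid M] [Module R M] {s : Set (Module.Dual R M)} {φ : Module.Dual R M}
    (hφ : φ ∈ PointedCone.hull R s) {x : M} (hx : ∀ f ∈ s, 0 ≤ f x) : 0 ≤ φ x := by
  have hx' : x ∈ PointedCone.dual .id (PointedCone.hull R s : Set (Module.Dual R M)) := by
    rwa [PointedCone.dual_hull]
  exact hx' hφ

theorem eqOn_zero_of_nonneg {R M N : Type*} [Ring R] [AddCommGroup M] [Module R M]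
    [AddCommGroup N] [PartialOrder N] [IsOrderedAddMonoid N] [Module R N] {g : M →ₗ[R] N}
    {W : Submodule R M} (h : ∀ x ∈ W, 0 ≤ g x) : Set.EqOn g 0 W := fun x hx =>
  le_antisymm (by simpa using h (-x) (W.neg_mem hx)) (h x hx)

section LinearFunctionals

variable {K V : Type*} [Field K] [AddCommGroup V] [Module K V]

theorem eqOn_add_smul_of_eqOn_inf_ker {f g φ : Module.Dual K V} {W : Submodule K V} {x₀ : V}
    (hx₀ : x₀ ∈ W) (hf : f x₀ ≠ 0) (hφ : Set.EqOn φ g ↑(W ⊓ LinearMap.ker f)) :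
    Set.EqOn (φ + ((g x₀ - φ x₀) / f x₀) • f) g W := by
  intro x hx
  have hproj : φ (x - (f x / f x₀) • x₀) = g (x - (f x / f x₀) • x₀) :=
    hφ ⟨W.sub_mem hx (W.smul_mem _ hx₀), by simp [hf]⟩
  simp only [map_sub, map_smul, smul_eq_mul] at hproj
  simp only [LinearMap.add_apply, LinearMap.smul_apply, smul_eq_mul]
  linear_combination hproj

variable [LinearOrder K] [IsStrictOrderedRing K]

theorem exists_mem_hull_eqOn {s : Set (Module.Dual K V)} (hs : s.Finite) {g : Module.Dual K V}
    {W : Submodule K V} (h : ∀ x ∈ W, (∀ f ∈ s, 0 ≤ f x) → 0 ≤ g x) :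
    ∃ φ ∈ PointedCone.hull K s, Set.EqOn φ g W := by
  induction s, hs using Set.Finite.induction_on generalizing W with
  | empty =>
    exact ⟨0, zero_mem _, (eqOn_zero_of_nonneg fun x hx => h x hx (by simp)).symm⟩
  | @insert f s _ _ ih =>
    have hmono : PointedCone.hull K s ≤ PointedCone.hull K (insert f s) :=
      Submodule.span_mono (Set.subset_insert f s)
    by_cases hg : ∀ x ∈ W, (∀ f' ∈ s, 0 ≤ f' x) → 0 ≤ g x
    · obtain ⟨φ, hφ, hφg⟩ := ih hg
      exact ⟨φ, hmono hφ, hφg⟩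
    · push Not at hg
      obtain ⟨x₀, hx₀, hsx₀, hgx₀⟩ := hg
      have hfx₀ : f x₀ < 0 := by
        by_contra! hf
        exact hgx₀.not_ge (h x₀ hx₀ (Set.forall_mem_insert.2 ⟨hf, hsx₀⟩))
      obtain ⟨φ, hφ, hφg⟩ := ih (W := W ⊓ LinearMap.ker f) fun x hx hsx =>
        h x hx.1 (Set.forall_mem_insert.2 ⟨(LinearMap.mem_ker.1 hx.2).ge, hsx⟩)
      have hcoeff : 0 ≤ (g x₀ - φ x₀) / f x₀ :=
        div_nonneg_of_nonpos (by linarith [apply_nonneg_of_mem_hull hφ hsx₀]) hfx₀.le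
      have hf : f ∈ PointedCone.hull K (insert f s) :=
        PointedCone.subset_hull (Set.mem_insert f s)
      exact ⟨φ + ((g x₀ - φ x₀) / f x₀) • f,
        add_mem (hmono hφ) (Submodule.smul_mem _ ⟨_, hcoeff⟩ hf),
        eqOn_add_smul_of_eqOn_inf_ker hx₀ hfx₀.ne hφg⟩

end LinearFunctionals

section LinearInequalities

variable {K V ι : Type*} [Field K] [LinearOrder K] [IsStrictOrderedRing K]
  [AddCommGroup V] [Module K V]

theorem exists_nonneg_forall_eq_dotProduct [Fintype ι] {B : V →ₗ[K] ι → K} {g : Module.Dual K V}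
    (h : ∀ x, 0 ≤ B x → 0 ≤ g x) : ∃ y : ι → K, 0 ≤ y ∧ ∀ x, g x = y ⬝ᵥ B x := by
  obtain ⟨φ, hφ, hφg⟩ := exists_mem_hull_eqOn (W := ⊤)
    (Set.finite_range fun i => LinearMap.proj i ∘ₗ B) fun x _ hx => h x (Set.forall_mem_range.1 hx)
  obtain ⟨c, rfl⟩ := (Submodule.mem_span_range_iff_exists_fun _).1 hφ
  refine ⟨fun i => c i, fun i => (c i).2, fun x => ?_⟩
  calc g x = (∑ i, c i • LinearMap.proj i ∘ₗ B) x := (hφg Submodule.mem_top).symm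
    _ = ∑ i, c i * B x i := LinearMap.sum_apply ..

theorem exists_map_le_of_map_le_smul {E : Type*} [AddCommGroup E] [PartialOrder E] [Module K E]
    [PosSMulMono K E] {A : V →ₗ[K] E} {b : E} {x : V} {t : K} (ht : 0 < t) (h : A x ≤ t • b) :
    ∃ x, A x ≤ b :=
  ⟨t⁻¹ • x, by rwa [map_smul, inv_smul_le_iff_of_pos ht]⟩

theorem exists_nonneg_dotProduct_neg_of_forall_not_le [Fintype ι] {A : V →ₗ[K] ι → K} {b : ι → K}
    (h : ∀ x, ¬A x ≤ b) : ∃ y : ι → K, 0 ≤ y ∧ (∀ x, y ⬝ᵥ A x = 0) ∧ y ⬝ᵥ b < 0 := by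
  let slack : V × K →ₗ[K] ι → K := (LinearMap.snd K V K).smulRight b - A ∘ₗ LinearMap.fst K V K
  have slack_apply (x : V) (t : K) : slack (x, t) = t • b - A x := rfl
  have hslack : ∀ p, 0 ≤ slack p → 0 ≤ (-LinearMap.snd K V K) p := by
    rintro ⟨x, t⟩ hxt
    rw [slack_apply, sub_nonneg] at hxt
    by_contra! ht
    obtain ⟨x', hx'⟩ := exists_map_le_of_map_le_smul (by simpa using ht) hxt
    exact h x' hx'
  obtain ⟨y, hy, hys⟩ := exists_nonneg_forall_eq_dotProduct hslack
  refine ⟨y, hy, fun x => ?_, ?_⟩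
  · simpa [slack_apply] using hys (x, 0)
  · have hyb : -1 = y ⬝ᵥ b := by simpa [slack_apply] using hys (0, 1)
    linarith

theorem farkas_lemma_general [Fintype ι] (A : V →ₗ[K] ι → K) (b : ι → K) :
    (∃ x, A x ≤ b) ↔ ∀ y : ι → K, 0 ≤ y → (∀ x, y ⬝ᵥ A x = 0) → 0 ≤ y ⬝ᵥ b := by
  constructor
  · rintro ⟨x, hx⟩ y hy hyA
    calc 0 = y ⬝ᵥ A x := (hyA x).symm
      _ ≤ y ⬝ᵥ b := dotProduct_le_dotProduct_of_nonneg_left hx hy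
  · intro h
    by_contra! hA
    obtain ⟨y, hy, hyA, hyb⟩ := exists_nonneg_dotProduct_neg_of_forall_not_le hA
    exact hyb.not_ge (h y hy hyA)

end LinearInequalities

/-- Farkas' lemma: `A x ≤ b` is solvable iff every nonnegative `y` with `y A = 0`
satisfies `y ⬝ᵥ b ≥ 0`. -/
theorem farkas_lemma (m n : ℕ) (A : Matrix (Fin m) (Fin n) ℝ) (b : Fin m → ℝ) :
    (∃ x : Fin n → ℝ, A.mulVec x ≤ b) ↔
      ∀ y : Fin m → ℝ, 0 ≤ y → Matrix.vecMul y A = 0 → 0 ≤ y ⬝ᵥ b := by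
  simpa [dotProduct_mulVec, dotProduct_eq_zero_iff] using farkas_lemma_general A.mulVecLin b
end

section
/- Let A be a rational m × n matrix and b ∈ ℚ^m. If there is no vector x ∈ ℚ^n with A x ≤ b (componentwise), then there exists a rational row vector y ∈ ℚ^m with y ≥ 0 (componentwise), y A = 0, and y · b < 0. Equivalently: whenever a finite conjunction of linear inequalities 0 ≤ t_i with rational coefficients is unsatisfiable over the rationals, some non-negative rational linear combination of the inequalities simplifies to 0 ≤ β for a constant β < 0. -/
open Matrix

/-!
Fourier–Motzkin elimination. Eliminating the variable with coefficient column `a` multiplies the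
system `A x ≤ b` by a nonnegative matrix `W` with `W a = 0`, chosen so that every solution of
`W A x ≤ W b` becomes a solution of `A x ≤ b` after adjusting that one variable. Hence
infeasibility passes to the new system, and a certificate `z` of the new system gives the
certificate `z W` of the old one. Once all columns vanish, infeasibility means that some entry of
the right-hand side is negative.
-/

lemma exists_between_of_forall_le_of_finite {α : Type*} [Lattice α] [Nonempty α]
    {s t : Set α} (hs : s.Finite) (ht : t.Finite) (hst : ∀ x ∈ s, ∀ y ∈ t, x ≤ y) :
    (upperBounds s ∩ lowerBounds t).Nonempty := by
  lift s to Finset α using hs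
  rcases s.eq_empty_or_nonempty with rfl | hne
  · simpa [BddBelow] using ht.bddBelow
  · have hlub := Finset.isLUB_sup' hne
    exact ⟨_, hlub.1, fun y hy => hlub.2 fun x hx => hst x hx y hy⟩

lemma inv_mul_le_iff_of_neg {K : Type*} [DivisionRing K] [LinearOrder K] [IsStrictOrderedRing K]
    {a b c : K} (hc : c < 0) : c⁻¹ * b ≤ a ↔ c * a ≤ b := by
  simpa [inv_neg] using inv_mul_le_iff₀ (a := a) (b := -b) (neg_pos.2 hc)

lemma vecMul_nonneg {ι κ R : Type*} [Fintype ι] [Semiring R] [PartialOrder R] [IsOrderedRing R]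
    {v : ι → R} {M : Matrix ι κ R} (hv : 0 ≤ v) (hM : ∀ i, 0 ≤ M i) : 0 ≤ v ᵥ* M :=
  fun j => Finset.sum_nonneg fun i _ => mul_nonneg (hv i) (hM i j)

lemma exists_nonneg_dotProduct_neg {ι R : Type*} [Fintype ι] [NonAssocSemiring R] [LinearOrder R]
    [ZeroLEOneClass R] {b : ι → R} (h : ¬ 0 ≤ b) : ∃ y, 0 ≤ y ∧ y ⬝ᵥ b < 0 := by
  classical
  obtain ⟨i, hi⟩ : ∃ i, b i < 0 := by simpa [Pi.le_def] using h
  exact ⟨Pi.single i 1, Pi.single_nonneg.2 zero_le_one, by rwa [single_one_dotProduct]⟩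

section FourierMotzkin

universe u

variable {ι : Type u} {K : Type*} [DivisionRing K] [LinearOrder K]

/-- The Fourier–Motzkin multipliers eliminating a variable with coefficient column `a`. The
inequalities not involving the variable are kept; each inequality with positive coefficient is
combined with each one with negative coefficient, after scaling the coefficients to `1` and `-1`. -/
def fourierMotzkin [DecidableEq ι] (a : ι → K) :
    Matrix ({i // a i = 0} ⊕ {i // 0 < a i} × {i // a i < 0}) ι K :=
  of fun
    | .inl i => Pi.single i.1 1
    | .inr (p, q) => Pi.single p.1 (a p)⁻¹ - Pi.single q.1 (a q)⁻¹

lemma fourierMotzkin_mulVec_inl [Fintype ι] [DecidableEq ι] (a c : ι → K) (i : {i // a i = 0}) :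
    (fourierMotzkin a *ᵥ c) (.inl i) = c i := by
  simp [fourierMotzkin, mulVec]

lemma fourierMotzkin_mulVec_inr [Fintype ι] [DecidableEq ι] (a c : ι → K)
    (p : {i // 0 < a i}) (q : {i // a i < 0}) :
    (fourierMotzkin a *ᵥ c) (.inr (p, q)) = (a p)⁻¹ * c p - (a q)⁻¹ * c q := by
  change (Pi.single p.1 (a p)⁻¹ - Pi.single q.1 (a q)⁻¹) ⬝ᵥ c = _
  rw [sub_dotProduct, single_dotProduct, single_dotProduct]

lemma fourierMotzkin_mulVec_self [Fintype ι] [DecidableEq ι] (a : ι → K) :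
    fourierMotzkin a *ᵥ a = 0 := by
  ext (i | ⟨p, q⟩)
  · rw [fourierMotzkin_mulVec_inl, i.2, Pi.zero_apply]
  · simp [fourierMotzkin_mulVec_inr, p.2.ne', q.2.ne]

variable [IsStrictOrderedRing K]

lemma fourierMotzkin_nonneg [DecidableEq ι] (a : ι → K)
    (r : {i // a i = 0} ⊕ {i // 0 < a i} × {i // a i < 0}) : 0 ≤ fourierMotzkin a r := by
  rcases r with i | ⟨p, q⟩
  · exact (Pi.single_nonneg.2 zero_le_one : 0 ≤ (Pi.single i.1 1 : ι → K))
  · have hp : 0 ≤ (Pi.single p.1 (a p)⁻¹ : ι → K) := Pi.single_nonneg.2 (inv_nonneg.2 p.2.le)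
    have hq : (Pi.single q.1 (a q)⁻¹ : ι → K) ≤ 0 := Pi.single_nonpos.2 (inv_nonpos.2 q.2.le)
    exact sub_nonneg.2 (hq.trans hp)

lemma exists_forall_mul_le_of_fourierMotzkin_mulVec_nonneg [Fintype ι] [DecidableEq ι]
    {a c : ι → K} (h : 0 ≤ fourierMotzkin a *ᵥ c) : ∃ t, ∀ i, a i * t ≤ c i := by
  have hbounds : ∀ i j, a i < 0 → 0 < a j → (a i)⁻¹ * c i ≤ (a j)⁻¹ * c j := by
    intro i j hi hj
    rw [← sub_nonneg, ← fourierMotzkin_mulVec_inr a c ⟨j, hj⟩ ⟨i, hi⟩]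
    exact h _
  obtain ⟨t, hlower, hupper⟩ :
      (upperBounds ((fun i => (a i)⁻¹ * c i) '' {i | a i < 0}) ∩
        lowerBounds ((fun i => (a i)⁻¹ * c i) '' {i | 0 < a i})).Nonempty := by
    refine exists_between_of_forall_le_of_finite (Set.toFinite _) (Set.toFinite _) ?_
    rintro _ ⟨i, hi, rfl⟩ _ ⟨j, hj, rfl⟩
    exact hbounds i j hi hj
  refine ⟨t, fun i => ?_⟩
  rcases lt_trichotomy (a i) 0 with hi | hi | hi
  · exact (inv_mul_le_iff_of_neg hi).1 (hlower ⟨i, hi, rfl⟩)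
  · simpa [hi, fourierMotzkin_mulVec_inl] using h (.inl ⟨i, hi⟩)
  · exact (le_inv_mul_iff₀ hi).1 (hupper ⟨i, hi, rfl⟩)

variable {κ : Type*} [Fintype κ]

lemma exists_mulVec_le_of_fourierMotzkin [Fintype ι] [DecidableEq ι] {A : Matrix ι κ K}
    {b : ι → K} (k : κ)
    (h : ∃ x, (fourierMotzkin (A.col k) * A) *ᵥ x ≤ fourierMotzkin (A.col k) *ᵥ b) :
    ∃ x, A *ᵥ x ≤ b := by
  classical
  obtain ⟨x, hx⟩ := h
  have hresidual : 0 ≤ fourierMotzkin (A.col k) *ᵥ (b - A *ᵥ x) := by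
    rwa [mulVec_sub, mulVec_mulVec, sub_nonneg]
  obtain ⟨t, ht⟩ := exists_forall_mul_le_of_fourierMotzkin_mulVec_nonneg hresidual
  refine ⟨Pi.single k t + x, ?_⟩
  rw [mulVec_add, mulVec_single, ← le_sub_iff_add_le]
  exact ht

-- The rows vary in the induction because elimination changes the set of inequalities.
lemma exists_certificate_of_col_eq_zero_of_notMem (s : Finset κ) :
    ∀ {ι : Type u} [Fintype ι] (A : Matrix ι κ K) (b : ι → K),
      (∀ k ∉ s, A.col k = 0) → (¬ ∃ x, A *ᵥ x ≤ b) →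
      ∃ y, 0 ≤ y ∧ y ᵥ* A = 0 ∧ y ⬝ᵥ b < 0 := by
  classical
  induction s using Finset.induction with
  | empty =>
    intro ι _ A b hA h
    obtain rfl : A = 0 := Matrix.ext_col fun k => hA k (Finset.notMem_empty k)
    obtain ⟨y, hy, hyb⟩ : ∃ y, 0 ≤ y ∧ y ⬝ᵥ b < 0 :=
      exists_nonneg_dotProduct_neg fun hb => h ⟨0, by rwa [mulVec_zero]⟩
    exact ⟨y, hy, vecMul_zero y, hyb⟩
  | insert k s _ ih =>
    intro ι _ A b hA h
    let W := fourierMotzkin (A.col k)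
    have hWA : ∀ j ∉ s, (W * A).col j = 0 := by
      intro j hj
      change W *ᵥ A.col j = 0
      rcases eq_or_ne j k with rfl | hjk
      · exact fourierMotzkin_mulVec_self _
      · rw [hA j (by simp [hjk, hj]), mulVec_zero]
    obtain ⟨z, hz, hzA, hzb⟩ :=
      ih (W * A) (W *ᵥ b) hWA (mt (exists_mulVec_le_of_fourierMotzkin k) h)
    exact ⟨z ᵥ* W, vecMul_nonneg hz (fourierMotzkin_nonneg _), by rwa [vecMul_vecMul],
      by rwa [← dotProduct_mulVec]⟩

end FourierMotzkin

theorem farkas_certificate_general {ι κ K : Type*} [Fintype ι] [Fintype κ] [DivisionRing K]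
    [LinearOrder K] [IsStrictOrderedRing K] (A : Matrix ι κ K) (b : ι → K)
    (h : ¬ ∃ x, A *ᵥ x ≤ b) : ∃ y, 0 ≤ y ∧ y ᵥ* A = 0 ∧ y ⬝ᵥ b < 0 :=
  exists_certificate_of_col_eq_zero_of_notMem Finset.univ A b
    (fun k hk => absurd (Finset.mem_univ k) hk) h

/-- Rational Farkas certificates of unsatisfiability: if `A x ≤ b` has no rational
solution, then some nonnegative rational combination `y` with `y A = 0` has `y ⬝ᵥ b < 0`. -/
theorem farkas_certificate (m n : ℕ) (A : Matrix (Fin m) (Fin n) ℚ) (b : Fin m → ℚ)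
    (h : ¬ ∃ x : Fin n → ℚ, A.mulVec x ≤ b) :
    ∃ y : Fin m → ℚ, 0 ≤ y ∧ Matrix.vecMul y A = 0 ∧ y ⬝ᵥ b < 0 :=
  farkas_certificate_general A b h
end

section
/- (Interpolants for linear inequalities) Let K be a finite set of variable indices, and consider finite families of affine functions t_i(x) = Σ_{k∈K} c_{i,k} x_k + d_i (for i in a finite index set I) and s_j(x) = Σ_{k∈K} b_{j,k} x_k + e_j (for j in a finite index set J) with real coefficients. Suppose α_i ≥ 0 (i ∈ I) and β_j ≥ 0 (j ∈ J) are real numbers such that the combination Σ_i α_i t_i + Σ_j β_j s_j is a constant negative function, i.e., for every k ∈ K, Σ_i α_i c_{i,k} + Σ_j β_j b_{j,k} = 0, and Σ_i α_i d_i + Σ_j β_j e_j < 0. Then the affine function u(x) = Σ_i α_i t_i(x) satisfies: (1) for every x ∈ ℝ^K, if 0 ≤ t_i(x) for all i ∈ I then 0 ≤ u(x); (2) for every x ∈ ℝ^K, if 0 ≤ u(x) and 0 ≤ s_j(x) for all j ∈ J, then a contradiction follows (no such x exists); and (3) for every k ∈ K, if the coefficient Σ_i α_i c_{i,k} of x_k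 in u is nonzero, then x_k occurs in some t_i (some c_{i,k} ≠ 0) and also in some s_j (some b_{j,k} ≠ 0). -/
open Finset

/-!
Write `t x = A *ᵥ x + d` and `s x = B *ᵥ x + e`. Nonnegative weights preserve nonnegativity, so
`α ⬝ᵥ t x = (α ᵥ* A) ⬝ᵥ x + α ⬝ᵥ d` is entailed by `0 ≤ t x`, and likewise for `β ⬝ᵥ s x`. The two
combinations add up to a negative constant, so they cannot both be nonnegative. Their linear parts
cancel, so a variable occurring in one occurs in the other.
-/

section

open Matrix

variable {R I J K : Type*} [Fintype I]

theorem exists_ne_zero_of_vecMul_ne_zero [NonUnitalNonAssocSemiring R] {α : I → R}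
    {A : Matrix I K R} {k : K} (h : (α ᵥ* A) k ≠ 0) : ∃ i, A i k ≠ 0 := by
  obtain ⟨i, -, hi⟩ := exists_ne_zero_of_sum_ne_zero h
  exact ⟨i, right_ne_zero_of_mul hi⟩

variable [Fintype K]

theorem dotProduct_mulVec_add [NonUnitalSemiring R] (α : I → R) (A : Matrix I K R) (x : K → R)
    (d : I → R) : α ⬝ᵥ (A *ᵥ x + d) = (α ᵥ* A) ⬝ᵥ x + α ⬝ᵥ d := by
  rw [dotProduct_add, dotProduct_mulVec]

theorem vecMul_dotProduct_add_nonneg [Semiring R] [PartialOrder R] [IsOrderedRing R]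
    {α : I → R} {A : Matrix I K R} {x : K → R} {d : I → R} (hα : 0 ≤ α) (h : 0 ≤ A *ᵥ x + d) :
    0 ≤ (α ᵥ* A) ⬝ᵥ x + α ⬝ᵥ d := by
  rw [← dotProduct_mulVec_add]
  exact dotProduct_nonneg_of_nonneg hα h

variable [Fintype J]

theorem vecMul_dotProduct_add_add_of_vecMul_add_eq_zero [NonUnitalNonAssocSemiring R]
    {α : I → R} {β : J → R} {A : Matrix I K R} {B : Matrix J K R}
    (h : α ᵥ* A + β ᵥ* B = 0) (x : K → R) (d : I → R) (e : J → R) :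
    ((α ᵥ* A) ⬝ᵥ x + α ⬝ᵥ d) + ((β ᵥ* B) ⬝ᵥ x + β ⬝ᵥ e) = α ⬝ᵥ d + β ⬝ᵥ e := by
  rw [add_add_add_comm, ← add_dotProduct, h, zero_dotProduct, zero_add]

theorem lra_interpolant_general [Semiring R] [PartialOrder R] [IsOrderedRing R]
    (A : Matrix I K R) (d : I → R) (B : Matrix J K R) (e : J → R)
    (α : I → R) (β : J → R) (hα : 0 ≤ α) (hβ : 0 ≤ β)
    (hcoef : α ᵥ* A + β ᵥ* B = 0) (hconst : α ⬝ᵥ d + β ⬝ᵥ e < 0) :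
    (∀ x, 0 ≤ A *ᵥ x + d → 0 ≤ (α ᵥ* A) ⬝ᵥ x + α ⬝ᵥ d) ∧
    (∀ x, 0 ≤ (α ᵥ* A) ⬝ᵥ x + α ⬝ᵥ d → ¬ 0 ≤ B *ᵥ x + e) ∧
    (∀ k, (α ᵥ* A) k ≠ 0 → (∃ i, A i k ≠ 0) ∧ (∃ j, B j k ≠ 0)) := by
  refine ⟨fun x ht ↦ vecMul_dotProduct_add_nonneg hα ht, fun x hu hs ↦ ?_, fun k hk ↦ ?_⟩
  · have hsum : 0 ≤ α ⬝ᵥ d + β ⬝ᵥ e := by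
      rw [← vecMul_dotProduct_add_add_of_vecMul_add_eq_zero hcoef x d e]
      exact add_nonneg hu (vecMul_dotProduct_add_nonneg hβ hs)
    exact hconst.not_ge hsum
  · have hB : (β ᵥ* B) k ≠ 0 := fun hβk ↦ hk <| by simpa [hβk] using congrFun hcoef k
    exact ⟨exists_ne_zero_of_vecMul_ne_zero hk, exists_ne_zero_of_vecMul_ne_zero hB⟩

end

/-- Interpolants for linear inequalities (LRA separators from Farkas coefficients):
if a nonnegative combination of the affine functions `t i` and `s j` is constant and
negative, then `u = Σ_i α i • t i` gives a separator `0 ≤ u(x)`: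
(1) it is entailed by the `t`-inequalities, (2) it contradicts the `s`-inequalities,
and (3) it only mentions variables occurring in both parts. -/
theorem lra_interpolant (I J K : Type) [Fintype I] [Fintype J] [Fintype K]
    (c : I → K → ℝ) (d : I → ℝ) (b : J → K → ℝ) (e : J → ℝ)
    (α : I → ℝ) (β : J → ℝ) (hα : ∀ i, 0 ≤ α i) (hβ : ∀ j, 0 ≤ β j)
    (hcoef : ∀ k, (∑ i, α i * c i k) + (∑ j, β j * b j k) = 0)
    (hconst : (∑ i, α i * d i) + (∑ j, β j * e j) < 0) :
    (∀ x : K → ℝ, (∀ i, 0 ≤ (∑ k, c i k * x k) + d i) →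
        0 ≤ (∑ k, (∑ i, α i * c i k) * x k) + (∑ i, α i * d i)) ∧
    (∀ x : K → ℝ, 0 ≤ (∑ k, (∑ i, α i * c i k) * x k) + (∑ i, α i * d i) →
        (∀ j, 0 ≤ (∑ k, b j k * x k) + e j) → False) ∧
    (∀ k, (∑ i, α i * c i k) ≠ 0 → (∃ i, c i k ≠ 0) ∧ (∃ j, b j k ≠ 0)) :=
  lra_interpolant_general c d b e α β hα hβ (funext hcoef) hconst
end

section
/- For every natural number n ≥ 2: (1) there exist real numbers x, y, z with 0 ≤ y + 2nx + n − 1, 0 ≤ −y − 2nx, 0 ≤ y + 2nz − 1, and 0 ≤ −y − 2nz + n; but (2) there exist no integers x, y, z with 0 ≤ y + 2nx + n − 1, 0 ≤ −y − 2nx, 0 ≤ y + 2nz − 1, and 0 ≤ −y − 2nz + n. That is, the conjunction A_n ∧ B_n is satisfiable over the reals but unsatisfiable over the integers. -/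
/-! Subtracting the two linear forms eliminates `y` and leaves `0 < 2n(z - x) < 2n`. Hence `z - x`
lies strictly between `0` and `1`, which is impossible over the integers, while
`(x, y, z) = (0, 0, 1/2)` is a solution as soon as `2` is invertible and `1 ≤ n`. -/

/-- The formula `A_n(x, y)`, with `n` allowed to be any element of the ring. Over the integers it
says `-n < y + 2nx ≤ 0`; it is kept in the non-strict form because the two differ over the reals. -/
def ConstraintA {R : Type*} [Ring R] [LE R] (n x y : R) : Prop :=
  0 ≤ y + 2 * n * x + n - 1 ∧ 0 ≤ -y - 2 * n * x

/-- The formula `B_n(y, z)`, with `n` allowed to be any element of the ring. Over the integers it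
says `0 < y + 2nz ≤ n`; it is kept in the non-strict form because the two differ over the reals. -/
def ConstraintB {R : Type*} [Ring R] [LE R] (n y z : R) : Prop :=
  0 ≤ y + 2 * n * z - 1 ∧ 0 ≤ -y - 2 * n * z + n

section OrderedRing

variable {R : Type*} [CommRing R] [LinearOrder R] [IsStrictOrderedRing R] {n x y z : R}

theorem ConstraintA.one_le (hA : ConstraintA n x y) : 1 ≤ n := by
  linarith [hA.1, hA.2]

theorem ConstraintA.lt_of_constraintB (hA : ConstraintA n x y) (hB : ConstraintB n y z) :
    x < z := by
  have two_n_nonneg : 0 ≤ 2 * n := by linarith [hA.one_le]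
  have scaled : 2 * n * x < 2 * n * z := by linarith [hA.2, hB.1]
  exact lt_of_mul_lt_mul_left scaled two_n_nonneg

theorem ConstraintA.lt_add_one_of_constraintB (hA : ConstraintA n x y) (hB : ConstraintB n y z) :
    z < x + 1 := by
  have two_n_nonneg : 0 ≤ 2 * n := by linarith [hA.one_le]
  have scaled : 2 * n * z < 2 * n * (x + 1) := by linarith [hA.1, hB.2]
  exact lt_of_mul_lt_mul_left scaled two_n_nonneg

theorem constraintA_zero_zero (hn : 1 ≤ n) : ConstraintA n 0 0 := by
  constructor <;> linarith

theorem constraintB_zero_invOf_two [Invertible (2 : R)] (hn : 1 ≤ n) :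
    ConstraintB n 0 ⅟2 := by
  have two_n_half : 2 * n * ⅟2 = n := by rw [mul_right_comm, mul_invOf_self, one_mul]
  constructor <;> linarith

theorem exists_constraintA_and_constraintB_iff [Invertible (2 : R)] :
    (∃ x y z : R, ConstraintA n x y ∧ ConstraintB n y z) ↔ 1 ≤ n :=
  ⟨fun ⟨_, _, _, hA, _⟩ ↦ hA.one_le,
    fun hn ↦ ⟨0, 0, ⅟2, constraintA_zero_zero hn, constraintB_zero_invOf_two hn⟩⟩

end OrderedRing

theorem not_exists_int_constraintA_and_constraintB (n : ℤ) :
    ¬ ∃ x y z : ℤ, ConstraintA n x y ∧ ConstraintB n y z := by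
  rintro ⟨x, y, z, hA, hB⟩
  exact (hA.lt_of_constraintB hB).not_ge (Int.lt_add_one_iff.mp (hA.lt_add_one_of_constraintB hB))

theorem An_Bn_real_sat_int_unsat_general {R : Type*} [CommRing R] [LinearOrder R]
    [IsStrictOrderedRing R] [Invertible (2 : R)] (n : ℕ) :
    ((∃ x y z : R, ConstraintA (n : R) x y ∧ ConstraintB (n : R) y z) ↔ 1 ≤ n) ∧
    ¬ ∃ x y z : ℤ, ConstraintA (n : ℤ) x y ∧ ConstraintB (n : ℤ) y z :=
  ⟨exists_constraintA_and_constraintB_iff.trans Nat.one_le_cast,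
    not_exists_int_constraintA_and_constraintB n⟩

/-- For `n ≥ 2`, the conjunction `A_n ∧ B_n` is satisfiable over the reals
but unsatisfiable over the integers. -/
theorem An_Bn_real_sat_int_unsat (n : ℕ) (hn : 2 ≤ n) :
    (∃ x y z : ℝ, 0 ≤ y + 2*n*x + n - 1 ∧ 0 ≤ -y - 2*n*x ∧
        0 ≤ y + 2*n*z - 1 ∧ 0 ≤ -y - 2*n*z + n) ∧
    ¬ (∃ x y z : ℤ, 0 ≤ y + 2*n*x + n - 1 ∧ 0 ≤ -y - 2*n*x ∧
        0 ≤ y + 2*n*z - 1 ∧ 0 ≤ -y - 2*n*z + n) := by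
  have : Invertible (2 : ℝ) := invertibleOfNonzero two_ne_zero
  have h := An_Bn_real_sat_int_unsat_general (R := ℝ) n
  simp only [ConstraintA, ConstraintB, and_assoc] at h
  exact ⟨h.1.mpr (one_le_two.trans hn), h.2⟩
end

section
/- For every natural number n ≥ 2: (1) for all integers x, y, if 0 ≤ y + 2nx + n − 1 and 0 ≤ −y − 2nx, then there exists an integer j with 0 ≤ j ≤ n − 1 such that 2n divides y + j; (2) for all integers y, z, if there exists an integer j with 0 ≤ j ≤ n − 1 and 2n dividing y + j, and moreover 0 ≤ y + 2nz − 1 and 0 ≤ −y − 2nz + n, then a contradiction follows. That is, the formula I_n = (2n ∣ y) ∨ (2n ∣ y+1) ∨ ⋯ ∨ (2n ∣ y+n−1) is a separator for A_n ∧ B_n over the integers. -/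
/-!
Putting `j = -(y + 2nx)` shows that `I_n` is exactly the projection of `A_n` to `y`, hence its
strongest consequence in `y`. It contradicts `B_n` because `y + 2nx` and `y + 2nz` are congruent
modulo `2n`, whereas `-n < y + 2nx ≤ 0 < y + 2nz ≤ n` puts them less than `2n` apart.
-/

theorem exists_mem_dvd_add_iff {R : Type*} [NonUnitalRing R] {s : Set R} {m y : R} :
    (∃ j ∈ s, m ∣ y + j) ↔ ∃ x, -(y + m * x) ∈ s := by
  constructor
  · rintro ⟨j, hj, k, hk⟩
    have hj_eq : -(y + m * -k) = j := by rw [mul_neg, ← hk]; abel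
    exact ⟨-k, hj_eq ▸ hj⟩
  · rintro ⟨x, hx⟩
    have hdvd : y + -(y + m * x) = m * -x := by rw [mul_neg]; abel
    exact ⟨_, hx, -x, hdvd⟩

theorem le_sub_of_modEq_of_lt {m u v : ℤ} (huv : u ≡ v [ZMOD m]) (hlt : u < v) : m ≤ v - u :=
  Int.le_of_dvd (sub_pos.2 hlt) huv.dvd

/-- The divisibility disjunction `I_n = (2n ∣ y) ∨ (2n ∣ y+1) ∨ ⋯ ∨ (2n ∣ y+n−1)`
is a separator for `A_n ∧ B_n` over the integers. -/
theorem In_separator (n : ℕ) (hn : 2 ≤ n) :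
    (∀ x y : ℤ, 0 ≤ y + 2*n*x + n - 1 → 0 ≤ -y - 2*n*x →
        ∃ j : ℤ, 0 ≤ j ∧ j ≤ (n : ℤ) - 1 ∧ (2*n : ℤ) ∣ (y + j)) ∧
    (∀ y z : ℤ, (∃ j : ℤ, 0 ≤ j ∧ j ≤ (n : ℤ) - 1 ∧ (2*n : ℤ) ∣ (y + j)) →
        0 ≤ y + 2*n*z - 1 → 0 ≤ -y - 2*n*z + n → False) := by
  have projection (y : ℤ) :
      (∃ j : ℤ, 0 ≤ j ∧ j ≤ (n : ℤ) - 1 ∧ (2 * n : ℤ) ∣ y + j) ↔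
        ∃ x : ℤ, -(y + 2 * n * x) ∈ Set.Icc 0 ((n : ℤ) - 1) := by
    rw [← exists_mem_dvd_add_iff]
    simp only [Set.mem_Icc, and_assoc]
  constructor
  · intro x y hA_lower hA_upper
    exact (projection y).2 ⟨x, by linarith, by linarith⟩
  · intro y z hI hB_lower hB_upper
    obtain ⟨x, hx_upper, hx_lower⟩ := (projection y).1 hI
    have hcongr : y + 2 * n * x ≡ y + 2 * n * z [ZMOD 2 * n] := by simp [Int.ModEq]
    have hgap := le_sub_of_modEq_of_lt hcongr (by linarith)
    linarith
end

section
/- For every natural number n ≥ 1, using Euclidean integer division ediv (where a ediv b for b ≠ 0 is the unique q with a = b·q + r and 0 ≤ r < |b|): (1) for all integers x, y, if 0 ≤ y + 2nx + n − 1 and 0 ≤ −y − 2nx, then 0 ≤ (y + n − 1) ediv (2n) + (−y) ediv (2n); (2) for all integers y, z, if 0 ≤ (y + n − 1) ediv (2n) + (−y) ediv (2n) and 0 ≤ y + 2nz − 1 and 0 ≤ −y − 2nz + n, then a contradiction follows. That is, the inequality 0 ≤ (y+n−1) ediv 2n + (−y) ediv 2n is a separator for A_n ∧ B_n over the integers.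 -/
/-!
The sum of the two quotients is nonnegative exactly when the interval `[-(y + n - 1), -y]` contains
a multiple `2nx` of `2n`, that is, when `A_n(x, y)` holds for some `x`. So the separator is the
projection of `A_n` to `y`, the strongest separator there is. If `B_n(y, z)` held as well, then
`2nz` would lie strictly between the consecutive multiples `2nx` and `2n(x + 1)`.
-/

theorem zero_le_ediv_add_ediv_iff_exists_mul_mem_Icc {a b d : ℤ} (hd : 0 < d) :
    0 ≤ a / d + b / d ↔ ∃ k, d * k ∈ Set.Icc (-a) b := by
  constructor
  · intro hsum
    refine ⟨b / d, ?_, Int.mul_ediv_self_le hd.ne'⟩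
    calc
      -a ≤ d * -(a / d) := by linarith [Int.mul_ediv_self_le (x := a) hd.ne']
      _ ≤ d * (b / d) := by gcongr; linarith
  · rintro ⟨k, ha, hb⟩
    have hk_neg : -k ≤ a / d := (Int.le_ediv_iff_mul_le hd).2 (by linarith)
    have hk : k ≤ b / d := (Int.le_ediv_iff_mul_le hd).2 (by linarith)
    linarith

/-- The inequality `0 ≤ (y+n−1) ediv 2n + (−y) ediv 2n` (Euclidean division)
is a separator for `A_n ∧ B_n` over the integers. -/
theorem ediv_separator (n : ℕ) (hn : 1 ≤ n) :
    (∀ x y : ℤ, 0 ≤ y + 2*n*x + n - 1 → 0 ≤ -y - 2*n*x →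
        0 ≤ Int.ediv (y + n - 1) (2*n) + Int.ediv (-y) (2*n)) ∧
    (∀ y z : ℤ, 0 ≤ Int.ediv (y + n - 1) (2*n) + Int.ediv (-y) (2*n) →
        0 ≤ y + 2*n*z - 1 → 0 ≤ -y - 2*n*z + n → False) := by
  have hpos : (0 : ℤ) < 2 * n := by lia
  have separator_iff (y : ℤ) : 0 ≤ Int.ediv (y + n - 1) (2 * n) + Int.ediv (-y) (2 * n) ↔
      ∃ x : ℤ, 2 * n * x ∈ Set.Icc (-(y + n - 1)) (-y) :=
    zero_le_ediv_add_ediv_iff_exists_mul_mem_Icc hpos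
  constructor
  · intro x y hA_lower hA_upper
    exact (separator_iff y).2 ⟨x, by linarith, by linarith⟩
  · intro y z hsep hB_lower hB_upper
    obtain ⟨x, hA_lower, hA_upper⟩ := (separator_iff y).1 hsep
    have hlt : 2 * n * x < 2 * n * z := by linarith
    have hlt_succ : 2 * n * z < 2 * n * (x + 1) := by linarith
    exact (Int.not_dvd_iff_lt_mul_succ _ hpos).2 ⟨x, hlt, hlt_succ⟩ (dvd_mul_right _ z)
end

section
/- For every natural number n ≥ 1 and every integer y: 0 ≤ (y + n − 1) ediv (2n) + (−y) ediv (2n) holds if and only if there exists an integer j with 0 ≤ j ≤ n − 1 such that 2n divides y + j. That is, the succinct division-based separator is equivalent to the exponentially larger divisibility disjunction I_n = (2n ∣ y) ∨ (2n ∣ y+1) ∨ ⋯ ∨ (2n ∣ y+n−1). -/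
/-
Write `r` for the residue of `-y` modulo `m`. Subtracting the multiple `-y - r` of `m` from `-y`
and adding it to `y + k` does not change `(y + k) / m + (-y) / m`, so this sum of quotients
collapses to the single quotient `(k - r) / m`, which is nonnegative exactly when `r ≤ k`.
Since `r` is the least `j ≥ 0` with `m ∣ y + j`, this says that some such `j` is at most `k`.
-/

theorem sub_ediv_add_ediv {m : ℤ} (hm : m ≠ 0) (k a : ℤ) :
    (k - a) / m + a / m = (k - a % m) / m := by
  have shift : k - a % m = k - a + m * (a / m) := by rw [Int.emod_def]; ring
  rw [shift, Int.add_mul_ediv_left _ _ hm]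

theorem emod_le_of_modEq {m a j : ℤ} (hj : 0 ≤ j) (h : a ≡ j [ZMOD m]) : a % m ≤ j := by
  lift j to ℕ using hj
  calc
    a % m = j % m := h
    _ = j % (m.natAbs : ℤ) := by rw [← Int.emod_abs, Int.abs_eq_natAbs]
    _ ≤ j := mod_cast Nat.mod_le j m.natAbs

theorem exists_dvd_add_iff_neg_emod_le {m : ℤ} (hm : m ≠ 0) (y k : ℤ) :
    (∃ j : ℤ, 0 ≤ j ∧ j ≤ k ∧ m ∣ y + j) ↔ -y % m ≤ k := by
  constructor
  · rintro ⟨j, hj, hjk, hdvd⟩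
    have hmod : -y ≡ j [ZMOD m] := by
      rwa [Int.modEq_iff_dvd, sub_neg_eq_add, add_comm]
    exact (emod_le_of_modEq hj hmod).trans hjk
  · intro hk
    have hdvd : m ∣ y + -y % m := by
      simpa [add_comm] using (Int.mod_modEq (-y) m).symm.dvd
    exact ⟨-y % m, Int.emod_nonneg _ hm, hk, hdvd⟩

theorem ediv_separator_iff_divisibility_general {m : ℤ} (hm : 0 < m) (k y : ℤ) :
    0 ≤ (y + k) / m + -y / m ↔ ∃ j : ℤ, 0 ≤ j ∧ j ≤ k ∧ m ∣ y + j := by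
  have collapse : (y + k) / m + -y / m = (k - -y % m) / m := by
    rw [← sub_ediv_add_ediv hm.ne', sub_neg_eq_add, add_comm k]
  rw [collapse, Int.ediv_nonneg_iff_of_pos hm, sub_nonneg, exists_dvd_add_iff_neg_emod_le hm.ne']

/-- The succinct division-based separator is equivalent to the exponentially larger
divisibility disjunction `I_n = (2n ∣ y) ∨ (2n ∣ y+1) ∨ ⋯ ∨ (2n ∣ y+n−1)`. -/
theorem ediv_separator_iff_divisibility (n : ℕ) (hn : 1 ≤ n) (y : ℤ) :
    0 ≤ Int.ediv (y + n - 1) (2*n) + Int.ediv (-y) (2*n) ↔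
      ∃ j : ℤ, 0 ≤ j ∧ j ≤ (n : ℤ) - 1 ∧ (2*n : ℤ) ∣ (y + j) := by
  rw [add_sub_assoc]
  exact ediv_separator_iff_divisibility_general (by lia) (n - 1) y
end
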